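/- In the SARG04-based oblivious key generation of the Jakobi et al. private database query protocol, each index is conclusive with probability exactly 1/4, and conclusive deductions are always correct. Precisely: fix a bit x and a basis θ ∈ {computational, Hadamard}, and a declared pair ((x̃⁰, θ̃⁰), (x̃¹, θ̃¹)) with θ̃⁰ ≠ θ̃¹ and (x̃^ℓ, θ̃^ℓ) = (x, θ) for some ℓ ∈ {0,1} (the other declared state being an arbitrary bit in the other basis). Let the receiver choose a basis θ^R uniformly at random from the two bases and measure |x⟩_θ in θ^R, obtaining outcome x^R by the Born rule. Call the result conclusive if x^R ≠ x̃^{ℓ'} for the (unique) ℓ' with θ^R = θ̃^{ℓ'}, in which case the receiver deduces that the sender's basis was θ̃^{1−ℓ'}. Then the probability of a conclusive result is 1/4, and conditioned on a conclusive result the deduced basis equals the true basis θ with probability 1. -/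

import Mathlib

/-! The Born weights between the four BB84 states are the whole content: two states of the same
basis are orthonormal, while states of conjugate bases overlap with probability `1/2`
(`bornProb_ket`). If the receiver measures in the sender's basis, the outcome is `x`, which is also
the declared bit for that basis, so the result is never conclusive. If he measures in the conjugate
basis, the outcome differs from the declared bit with probability `1/2`, and the basis he
deduces is then the sender's. The total is `1/2 * 1/2 = 1/4`, all of it from correct deductions. -/

open scoped BigOperators

/-- The bit `x` encoded in the basis `θ` of `ℂ²` (`θ = false`: computational basis,
`θ = true`: Hadamard basis).  For a fixed `θ`, the vectors `ket θ false`, `ket θ true`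
form the orthonormal basis labelled by `θ`, and `ket θ x` is the state `|x⟩_θ`. -/
noncomputable def ket (θ x : Bool) : Fin 2 → ℂ := fun i =>
  if θ then (if i = 1 ∧ x = true then -1 else 1) / ((Real.sqrt 2 : ℝ) : ℂ)
  else if x then (if i = 1 then 1 else 0) else (if i = 0 then 1 else 0)

/-- Born rule: probability `|⟨v, ψ⟩|²` of the outcome labelled by the basis vector `v`
when measuring `ψ ∈ ℂ²`. -/
noncomputable def bornProb (v ψ : Fin 2 → ℂ) : ℝ :=
  ‖∑ i, (starRingEnd ℂ) (v i) * ψ i‖ ^ 2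

/-- Given the declared bases `θ̃⁰ ≠ θ̃¹`, the unique index `ℓ'` with `θ̃^{ℓ'} = θ^R`. -/
def ellp (θt : Bool → Bool) (θR : Bool) : Bool := if θt false = θR then false else true

/-- The computational and Hadamard bases are orthonormal and mutually unbiased. -/
lemma bornProb_ket (θR y θ x : Bool) :
    bornProb (ket θR y) (ket θ x) = if θR = θ then (if y = x then 1 else 0) else 1 / 2 := by
  have hsq : ((Real.sqrt 2 : ℝ) : ℂ) * ((Real.sqrt 2 : ℝ) : ℂ) = 2 := by
    rw [← Complex.ofReal_mul, Real.mul_self_sqrt (by norm_num)]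
    norm_num
  have hinv : ((Real.sqrt 2 : ℝ) : ℂ)⁻¹ * ((Real.sqrt 2 : ℝ) : ℂ)⁻¹ = 1 / 2 := by
    rw [← mul_inv, hsq, one_div]
  cases θR <;> cases y <;> cases θ <;> cases x <;>
    simp [bornProb, ket, Fin.sum_univ_two, div_eq_mul_inv, hinv] <;> norm_num

/-- SARG04-based oblivious key generation in the Jakobi et al. PDQ protocol: the sender
sent `|x⟩_θ` and declared the pair `((x̃⁰,θ̃⁰),(x̃¹,θ̃¹))` with `θ̃⁰ ≠ θ̃¹`, one of which
is the state actually sent.  The receiver picks `θ^R` uniformly from the two bases and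
measures, obtaining `x^R` by the Born rule.  The result is conclusive when
`x^R ≠ x̃^{ℓ'}` for the unique `ℓ'` with `θ̃^{ℓ'} = θ^R`, in which case he deduces that
the sender's basis was `θ̃^{1−ℓ'}`.  Then: the probability of a conclusive result is
`1/4`, and the probability of a conclusive result with a *correct* deduced basis is
also `1/4` (so, conditioned on a conclusive result, the deduction is correct with
probability 1). -/
theorem jakobi_conclusive_prob (x θ : Bool) (xt θt : Bool → Bool)
    (hdist : θt false ≠ θt true)
    (hsent : ∃ ℓ : Bool, xt ℓ = x ∧ θt ℓ = θ) :
    ((1 / 2 : ℝ) * ∑ θR : Bool, ∑ xR : Bool,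
        (if xR ≠ xt (ellp θt θR)
          then bornProb (ket θR xR) (ket θ x) else 0)) = 1 / 4
    ∧
    ((1 / 2 : ℝ) * ∑ θR : Bool, ∑ xR : Bool,
        (if xR ≠ xt (ellp θt θR) ∧ θt (!(ellp θt θR)) = θ
          then bornProb (ket θR xR) (ket θ x) else 0)) = 1 / 4 := by
  obtain ⟨ℓ, rfl, rfl⟩ := hsent
  -- Only finitely many cases remain: the index `ℓ`, the two declared bases and the two declared bits.
  simp only [bornProb_ket, ellp, Fintype.sum_bool]
  generalize h0 : θt false = a at *
  generalize h1 : θt true = b at *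
  generalize k0 : xt false = c at *
  generalize k1 : xt true = d at *
  cases ℓ <;> cases a <;> cases b <;> cases c <;> cases d <;>
    simp_all <;> norm_num
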